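/- The generalized hypergeometric series ₃F₂(1/2, 1/2, 1/2; 3/2, 3/2; -1/4) equals π²/10. Concretely, the sum over n ≥ 0 of ((1/2)ₙ)³ / (((3/2)ₙ)² · n!) · (-1/4)ⁿ equals π²/10. -/

import Mathlib

open Real

/-- The Pochhammer symbol (shifted factorial) `(a)ₙ` for a real number `a`. -/
noncomputable def poch (a : ℝ) (n : ℕ) : ℝ := Polynomial.eval a (ascPochhammer ℝ n)

/-!
Integrating the binomial series of `1 / √(1 + x²)` twice, with a division by `x` in between, turns
the series at `-x²` into `x⁻¹ ∫₀ˣ arsinh t / t dt`. Under `t = sinh s` the integrand becomes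
`s coth s`, which has the primitive `s² / 2 + Li₂(1 - exp(-2s)) / 2`. At `x = 1/2` the upper limit
is `s = log φ`, with `φ` the golden ratio, and `1 - exp(-2s) = φ⁻¹`. The value
`Li₂(φ⁻¹) = π² / 10 - log² φ` follows from the reflection, duplication and Landen identities: since
`φ⁻² = 1 - φ⁻¹`, they form a linear system in `Li₂(φ⁻¹)`, `Li₂(φ⁻²)` and `Li₂(-φ⁻¹)`.
-/

open Set

section TermwiseCalculus

theorem eq_of_hasDerivAt_zero {f : ℝ → ℝ} {a b : ℝ} (hf : ContinuousOn f (uIcc a b))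
    (hd : ∀ t ∈ uIoo a b, HasDerivAt f 0 t) : f a = f b := by
  wlog hab : a ≤ b generalizing a b
  · rw [uIcc_comm] at hf
    rw [uIoo_comm] at hd
    exact (this hf hd (le_of_not_ge hab)).symm
  rcases hab.eq_or_lt with rfl | hlt
  · rfl
  rw [uIcc_of_lt hlt] at hf
  rw [uIoo_of_lt hlt] at hd
  obtain ⟨_, -, hslope⟩ := exists_hasDerivAt_eq_slope f (fun _ => 0) hlt hf hd
  rcases div_eq_zero_iff.1 hslope.symm with h | h <;> linarith

variable {ι : Type*} {c : ι → ℝ} {k : ι → ℕ} {r x : ℝ}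

theorem abs_mul_pow_le_abs_mul_pow (a : ℝ) (n : ℕ) (hx : |x| ≤ |r|) :
    |a * x ^ n| ≤ |a * r ^ n| := by
  simp only [abs_mul, abs_pow]
  gcongr

theorem summable_mul_pow_succ_div (hr : Summable fun i => c i * r ^ k i) (hx : |x| ≤ |r|) :
    Summable fun i => c i * x ^ (k i + 1) / (k i + 1) := by
  refine .of_norm_bounded (hr.abs.mul_right |x|) fun i => ?_
  calc |c i * x ^ (k i + 1) / (k i + 1)|
      = |c i * x ^ k i| * |x| / (k i + 1) := by
        rw [abs_div, pow_succ, ← mul_assoc, abs_mul _ x,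
          abs_of_nonneg (by positivity : (0 : ℝ) ≤ k i + 1)]
    _ ≤ |c i * x ^ k i| * |x| := div_le_self (by positivity) (by simp)
    _ ≤ |c i * r ^ k i| * |x| := by gcongr ?_ * _; exact abs_mul_pow_le_abs_mul_pow _ _ hx

theorem hasDerivAt_tsum_mul_pow_succ_div (hr : Summable fun i => c i * r ^ k i) (hx : |x| < |r|) :
    HasDerivAt (fun y => ∑' i, c i * y ^ (k i + 1) / (k i + 1)) (∑' i, c i * x ^ k i) x := by
  have hmem {y : ℝ} : y ∈ Ioo (-|r|) |r| ↔ |y| < |r| := abs_lt.symm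
  refine hasDerivAt_tsum_of_isPreconnected (𝕜 := ℝ) (t := Ioo (-|r|) |r|) (y₀ := x)
    (g := fun i y => c i * y ^ (k i + 1) / (k i + 1)) (g' := fun i y => c i * y ^ k i)
    hr.abs isOpen_Ioo isPreconnected_Ioo (fun i y _ => ?_)
    (fun i y hy => abs_mul_pow_le_abs_mul_pow (c i) (k i) (hmem.1 hy).le)
    (hmem.2 hx) (summable_mul_pow_succ_div hr hx.le) (hmem.2 hx)
  refine (((hasDerivAt_pow (k i + 1) y).const_mul (c i)).div_const (k i + 1 : ℝ)).congr_deriv ?_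
  push_cast
  field_simp

theorem hasSum_mul_pow_succ_div {F f : ℝ → ℝ} (hr : Summable fun i => c i * r ^ k i)
    (hx : |x| < |r|) (hF : ContinuousOn F (uIcc 0 x)) (hd : ∀ t ∈ uIoo 0 x, HasDerivAt F (f t) t)
    (hf : ∀ t ∈ uIoo 0 x, HasSum (fun i => c i * t ^ k i) (f t)) :
    HasSum (fun i => c i * x ^ (k i + 1) / (k i + 1)) (F x - F 0) := by
  set S : ℝ → ℝ := fun y => ∑' i, c i * y ^ (k i + 1) / (k i + 1)
  have hS : ∀ t ∈ uIcc 0 x, HasDerivAt S (∑' i, c i * t ^ k i) t := fun t ht =>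
    hasDerivAt_tsum_mul_pow_succ_div hr
      ((by simpa using abs_sub_left_of_mem_uIcc ht : |t| ≤ |x|).trans_lt hx)
  have hconst : F 0 - S 0 = F x - S x := by
    refine eq_of_hasDerivAt_zero (f := fun t => F t - S t)
      (hF.sub fun t ht => (hS t ht).continuousAt.continuousWithinAt) fun t ht => ?_
    have ht' : t ∈ uIcc 0 x := uIoo_subset_uIcc_self ht
    exact ((hd t ht).sub (hS t ht')).congr_deriv (by rw [(hf t ht).tsum_eq, sub_self])
  have hS0 : S 0 = 0 := by simp [S]
  have hSx : F x - F 0 = S x := by linarith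
  rw [hSx]
  exact (summable_mul_pow_succ_div hr hx.le).hasSum

end TermwiseCalculus

section Dilogarithm

/-- The dilogarithm `Li₂(x) = ∑_{n ≥ 1} xⁿ / n²` on `[-1, 1]`, with `n` shifted by one. Outside this
interval the series diverges and the value is the junk value `0`. -/
noncomputable def dilog (x : ℝ) : ℝ := ∑' n : ℕ, x ^ (n + 1) / ((n : ℝ) + 1) ^ 2

theorem summable_one_div_nat_succ_sq : Summable fun n : ℕ => 1 / ((n : ℝ) + 1) ^ 2 := by
  simpa using (summable_nat_add_iff 1).2 hasSum_zeta_two.summable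

theorem norm_dilog_term_le {x : ℝ} (hx : x ∈ Icc (-1 : ℝ) 1) (n : ℕ) :
    ‖x ^ (n + 1) / ((n : ℝ) + 1) ^ 2‖ ≤ 1 / ((n : ℝ) + 1) ^ 2 := by
  rw [norm_div, norm_pow, Real.norm_of_nonneg (by positivity : (0 : ℝ) ≤ ((n : ℝ) + 1) ^ 2)]
  gcongr
  exact pow_le_one₀ (norm_nonneg x) (abs_le.2 hx)

theorem summable_dilog {x : ℝ} (hx : x ∈ Icc (-1 : ℝ) 1) :
    Summable fun n : ℕ => x ^ (n + 1) / ((n : ℝ) + 1) ^ 2 :=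
  .of_norm_bounded summable_one_div_nat_succ_sq (norm_dilog_term_le hx)

theorem continuousOn_dilog : ContinuousOn dilog (Icc (-1) 1) :=
  continuousOn_tsum (fun _ => by fun_prop) summable_one_div_nat_succ_sq
    fun n _ hx => norm_dilog_term_le hx n

theorem dilog_zero : dilog 0 = 0 := by simp [dilog]

theorem dilog_one : dilog 1 = π ^ 2 / 6 := by
  have h := (hasSum_nat_add_iff' 1).2 hasSum_zeta_two
  simpa [dilog] using h.tsum_eq

theorem hasDerivAt_dilog {x : ℝ} (hx : |x| < 1) (hx0 : x ≠ 0) :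
    HasDerivAt dilog (-log (1 - x) / x) x := by
  have hlog {t : ℝ} (ht : |t| < 1) (ht0 : t ≠ 0) :
      HasSum (fun n : ℕ => 1 / ((n : ℝ) + 1) * t ^ n) (-log (1 - t) / t) := by
    refine ((hasSum_pow_div_log_of_abs_lt_one ht).div_const t).congr_fun fun n => ?_
    rw [pow_succ]
    field_simp
  obtain ⟨r, hxr, hr1⟩ := exists_between hx
  have hr0 : 0 < r := (abs_nonneg x).trans_lt hxr
  have hr : |r| = r := abs_of_pos hr0
  have h := hasDerivAt_tsum_mul_pow_succ_div (k := fun n : ℕ => n)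
    (hlog (hr.trans_lt hr1) hr0.ne').summable (hxr.trans_eq hr.symm)
  rw [(hlog hx hx0).tsum_eq] at h
  refine h.congr_of_eventuallyEq (.of_forall fun y => tsum_congr fun n => ?_)
  field_simp

theorem dilog_add_dilog_neg {x : ℝ} (hx : x ∈ Icc (-1 : ℝ) 1) :
    dilog x + dilog (-x) = dilog (x ^ 2) / 2 := by
  have hneg : -x ∈ Icc (-1 : ℝ) 1 := ⟨neg_le_neg hx.2, neg_le.1 hx.1⟩
  have hsq : x ^ 2 ∈ Icc (-1 : ℝ) 1 :=
    ⟨by linarith [sq_nonneg x], (sq_le_one_iff_abs_le_one x).2 (abs_le.2 hx)⟩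
  have hsum := (summable_dilog hx).hasSum.add (summable_dilog hneg).hasSum
  refine hsum.unique (zero_add (dilog (x ^ 2) / 2) ▸ HasSum.even_add_odd ?_ ?_)
  · refine hasSum_zero.congr_fun fun n => ?_
    rw [(odd_two_mul_add_one n).neg_pow]
    ring
  · refine ((summable_dilog hsq).hasSum.div_const 2).congr_fun fun n => ?_
    have heven : Even (2 * n + 1 + 1) := ⟨n + 1, by ring⟩
    have hpow : x ^ (2 * n + 1 + 1) = (x ^ 2) ^ (n + 1) := by rw [← pow_mul]; ring_nf
    rw [heven.neg_pow, hpow]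
    push_cast
    field_simp
    ring

theorem continuousOn_log_mul_log_one_sub :
    ContinuousOn (fun x : ℝ => log x * log (1 - x)) (Iio 1) := by
  have hdiff : ∀ x < (1 : ℝ), DifferentiableAt ℝ (fun x : ℝ => log (1 - x)) x := fun x hx =>
    (differentiableAt_id.const_sub 1).log (sub_pos.2 hx).ne'
  have hslope : ContinuousOn (dslope (fun x : ℝ => log (1 - x)) 0) (Iio 1) :=
    (continuousOn_dslope (Iio_mem_nhds one_pos)).2
      ⟨fun x hx => (hdiff x hx).continuousAt.continuousWithinAt, hdiff 0 one_pos⟩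
  refine (continuous_mul_log.continuousOn.mul hslope).congr fun x _ => ?_
  have h := sub_smul_dslope (fun x : ℝ => log (1 - x)) 0 x
  simp only [sub_zero, log_one, smul_eq_mul] at h
  rw [← h, Pi.mul_apply]
  ring

theorem dilog_add_dilog_one_sub {x : ℝ} (hx : x ∈ Ioo (0 : ℝ) 1) :
    dilog x + dilog (1 - x) = π ^ 2 / 6 - log x * log (1 - x) := by
  have hcont : ContinuousOn (fun t => dilog t + dilog (1 - t) + log t * log (1 - t))
      (uIcc 0 x) := by
    rw [uIcc_of_lt hx.1]
    refine .add (.add ?_ ?_) ?_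
    · exact continuousOn_dilog.mono fun t ht => ⟨by linarith [ht.1], ht.2.trans hx.2.le⟩
    · exact continuousOn_dilog.comp (by fun_prop)
        fun t ht => ⟨by linarith [ht.2, hx.2], by linarith [ht.1]⟩
    · exact continuousOn_log_mul_log_one_sub.mono fun t ht => ht.2.trans_lt hx.2
  have hderiv : ∀ t ∈ uIoo 0 x,
      HasDerivAt (fun t => dilog t + dilog (1 - t) + log t * log (1 - t)) 0 t := by
    rw [uIoo_of_lt hx.1]
    rintro t ⟨ht0, htx⟩
    have ht1 : 0 < 1 - t := by linarith [hx.2]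
    have hsub : HasDerivAt (fun t : ℝ => 1 - t) (-1) t := (hasDerivAt_id t).const_sub 1
    have hdilog := hasDerivAt_dilog (abs_lt.2 ⟨by linarith, by linarith⟩) ht0.ne'
    have hdilog' := (hasDerivAt_dilog (abs_lt.2 ⟨by linarith, by linarith⟩) ht1.ne').comp t hsub
    refine ((hdilog.add hdilog').add
      ((hasDerivAt_log ht0.ne').mul (hsub.log ht1.ne'))).congr_deriv ?_
    rw [sub_sub_cancel]
    field_simp
    ring
  have h := eq_of_hasDerivAt_zero hcont hderiv
  simp only [dilog_zero, sub_zero, dilog_one, log_zero, zero_mul] at h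
  linarith

theorem dilog_add_dilog_neg_div_one_sub {y : ℝ} (hy : y ∈ Icc (-1 : ℝ) (1 / 2)) :
    dilog y + dilog (-y / (1 - y)) = -log (1 - y) ^ 2 / 2 := by
  have hmem : ∀ t ∈ uIcc 0 y, t ∈ Icc (-1 : ℝ) (1 / 2) := fun t ht =>
    ordConnected_Icc.uIcc_subset (by norm_num) hy ht
  have hcont : ContinuousOn (fun t => dilog t + dilog (-t / (1 - t)) + log (1 - t) ^ 2 / 2)
      (uIcc 0 y) := by
    have hne : ∀ t ∈ uIcc 0 y, 1 - t ≠ 0 := fun t ht => by linarith [(hmem t ht).2]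
    refine .add (.add ?_ ?_) ?_
    · exact continuousOn_dilog.mono fun t ht => ⟨(hmem t ht).1, by linarith [(hmem t ht).2]⟩
    · refine continuousOn_dilog.comp (.div (by fun_prop) (by fun_prop) hne) fun t ht => ?_
      obtain ⟨_, _⟩ := hmem t ht
      have hpos : 0 < 1 - t := by linarith
      exact ⟨by rw [le_div_iff₀ hpos]; linarith, by rw [div_le_one hpos]; linarith⟩
    · exact ((ContinuousOn.log (by fun_prop) hne).pow 2).div_const 2
  have hderiv : ∀ t ∈ uIoo 0 y,
      HasDerivAt (fun t => dilog t + dilog (-t / (1 - t)) + log (1 - t) ^ 2 / 2) 0 t := by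
    intro t ht
    obtain ⟨hl, hu⟩ : t ∈ Ioo (-1 : ℝ) (1 / 2) := uIoo_subset_Ioo (by norm_num) hy ht
    have ht0 : t ≠ 0 := ne_of_mem_of_not_mem ht left_notMem_uIoo
    have hpos : 0 < 1 - t := by linarith
    have hsub : HasDerivAt (fun t : ℝ => 1 - t) (-1) t := (hasDerivAt_id t).const_sub 1
    have hdilog := hasDerivAt_dilog (abs_lt.2 ⟨hl, by linarith⟩) ht0
    have harg : HasDerivAt (fun t : ℝ => -t / (1 - t)) (-1 / (1 - t) ^ 2) t :=
      ((hasDerivAt_id t).neg.div hsub hpos.ne').congr_deriv (by simp)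
    have hdilog' := (hasDerivAt_dilog (x := -t / (1 - t))
      (abs_lt.2 ⟨by rw [lt_div_iff₀ hpos]; linarith, by rw [div_lt_one hpos]; linarith⟩)
      (div_ne_zero (neg_ne_zero.2 ht0) hpos.ne')).comp t harg
    refine ((hdilog.add hdilog').add (((hsub.log hpos.ne').pow 2).div_const 2)).congr_deriv ?_
    have hinv : 1 - -t / (1 - t) = (1 - t)⁻¹ := by field_simp; ring
    rw [hinv, log_inv]
    field_simp
    push_cast
    ring
  have h := eq_of_hasDerivAt_zero hcont hderiv
  simp only [neg_zero, sub_zero, zero_div, dilog_zero, log_one] at h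
  linarith

theorem inv_goldenRatio_sq : goldenRatio⁻¹ ^ 2 = 1 - goldenRatio⁻¹ := by
  rw [inv_goldenRatio, neg_sq, goldenConj_sq, sub_neg_eq_add, add_comm]

theorem dilog_inv_goldenRatio : dilog goldenRatio⁻¹ = π ^ 2 / 10 - log goldenRatio ^ 2 := by
  set x := goldenRatio⁻¹
  have hx0 : 0 < x := inv_pos.2 goldenRatio_pos
  have hx1 : x < 1 := inv_lt_one_of_one_lt₀ one_lt_goldenRatio
  have hsq : x ^ 2 = 1 - x := inv_goldenRatio_sq
  have hlog : log x = -log goldenRatio := log_inv _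
  have hreflection := dilog_add_dilog_one_sub ⟨hx0, hx1⟩
  have hduplication := dilog_add_dilog_neg (x := x) ⟨by linarith, hx1.le⟩
  have hlanden := dilog_add_dilog_neg_div_one_sub (y := x ^ 2) ⟨by nlinarith, by nlinarith⟩
  have harg : -x ^ 2 / (1 - x ^ 2) = -x := by
    rw [show 1 - x ^ 2 = x by linarith]
    field_simp
  rw [harg, show 1 - x ^ 2 = x by linarith, hlog] at hlanden
  rw [← hsq, log_pow, hlog] at hreflection
  push_cast at hreflection
  linarith

end Dilogarithm

section Pochhammer

theorem poch_pos {a : ℝ} (ha : 0 < a) (n : ℕ) : 0 < poch a n := ascPochhammer_pos n a ha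

theorem mul_poch_add_one (a : ℝ) (n : ℕ) : a * poch (a + 1) n = poch a n * (a + n) := by
  have hleft : poch a (n + 1) = a * poch (a + 1) n := by simp [poch, ascPochhammer_succ_left]
  rw [← hleft, poch, poch, ascPochhammer_succ_eval]

theorem poch_div_factorial_eq_choose (a : ℝ) (n : ℕ) :
    poch a n / n.factorial = Ring.choose (a + n - 1) n := by
  have h := Ring.factorial_nsmul_multichoose_eq_ascPochhammer a n
  rw [Polynomial.ascPochhammer_smeval_eq_eval, Ring.multichoose_eq, nsmul_eq_mul] at h
  rw [poch, ← h]
  field_simp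

theorem hasSum_poch_div_factorial_mul_pow (a : ℝ) {x : ℝ} (hx : |x| < 1) :
    HasSum (fun n => poch a n / n.factorial * x ^ n) (1 / (1 - x) ^ a) := by
  have h := (one_div_one_sub_rpow_hasFPowerSeriesOnBall_zero a).hasSum (y := x)
    (by simpa [enorm_eq_nnnorm, ← NNReal.coe_lt_one] using hx)
  simpa [FormalMultilinearSeries.ofScalars, poch_div_factorial_eq_choose] using h

end Pochhammer

section Arsinh

theorem hasSum_arsinh {x : ℝ} (hx : |x| < 1) :
    HasSum (fun n : ℕ => poch (1 / 2) n / n.factorial * (-1) ^ n * x ^ (2 * n + 1) / (2 * n + 1))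
      (arsinh x) := by
  have hbinom {t : ℝ} (ht : |t| < 1) :
      HasSum (fun n : ℕ => poch (1 / 2) n / n.factorial * (-1) ^ n * t ^ (2 * n))
        (√(1 + t ^ 2))⁻¹ := by
    have h := hasSum_poch_div_factorial_mul_pow (1 / 2) (x := -t ^ 2)
      (by simpa [sq_lt_one_iff_abs_lt_one] using ht)
    rw [← sqrt_eq_rpow, sub_neg_eq_add, one_div (√_)] at h
    refine h.congr_fun fun n => ?_
    rw [neg_pow (t ^ 2), pow_mul t, mul_assoc]
  obtain ⟨r, hxr, hr1⟩ := exists_between hx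
  have hr : |r| = r := abs_of_pos ((abs_nonneg x).trans_lt hxr)
  have h := hasSum_mul_pow_succ_div (hbinom (hr.trans_lt hr1)).summable (hxr.trans_eq hr.symm)
    continuous_arsinh.continuousOn (fun t _ => hasDerivAt_arsinh t) fun t ht => hbinom ?_
  · simpa using h
  · have := abs_sub_left_of_mem_uIcc (uIoo_subset_uIcc_self ht)
    simp only [sub_zero] at this
    linarith

theorem hasDerivAt_primitive_mul_coth {s : ℝ} (hs : 0 < s) :
    HasDerivAt (fun s => s ^ 2 / 2 + dilog (1 - exp (-2 * s)) / 2) (s * (cosh s / sinh s)) s := by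
  have hexp : HasDerivAt (fun s : ℝ => 1 - exp (-2 * s)) (2 * exp (-2 * s)) s :=
    ((((hasDerivAt_id s).const_mul (-2)).exp).const_sub 1).congr_deriv (by simp; ring)
  have hpos : 0 < exp (-2 * s) := exp_pos _
  have hlt : exp (-2 * s) < 1 := exp_lt_one_iff.2 (by linarith)
  have hdilog := (hasDerivAt_dilog (x := 1 - exp (-2 * s))
    (abs_lt.2 ⟨by linarith, by linarith⟩) (by linarith)).comp s hexp
  refine ((((hasDerivAt_id s).pow 2).div_const 2).add (hdilog.div_const 2)).congr_deriv ?_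
  have hcoth : cosh s / sinh s = (1 + exp (-2 * s)) / (1 - exp (-2 * s)) := by
    have hsq : exp (-2 * s) = exp (-s) * exp (-s) := by rw [← exp_add]; ring_nf
    have hinv : exp s * exp (-s) = 1 := by rw [← exp_add, add_neg_cancel, exp_zero]
    rw [div_eq_div_iff (sinh_pos_iff.2 hs).ne' (by linarith), cosh_eq, sinh_eq, hsq]
    linear_combination (-exp (-s)) * hinv
  have hne : 1 - exp (-2 * s) ≠ 0 := by linarith
  rw [hcoth, sub_sub_cancel, log_exp, id]
  generalize exp (-2 * s) = u at hne ⊢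
  field_simp
  push_cast
  ring

theorem hasDerivAt_primitive_arsinh_div {x : ℝ} (hx : 0 < x) :
    HasDerivAt (fun x => arsinh x ^ 2 / 2 + dilog (1 - exp (-2 * arsinh x)) / 2)
      (arsinh x / x) x := by
  have h := (hasDerivAt_primitive_mul_coth (arsinh_pos_iff.2 hx)).comp x (hasDerivAt_arsinh x)
  refine h.congr_deriv ?_
  rw [cosh_arsinh, sinh_arsinh]
  field_simp

theorem hasSum_primitive_arsinh_div {x : ℝ} (hx0 : 0 ≤ x) (hx1 : x < 1) :
    HasSum (fun n : ℕ => poch (1 / 2) n / n.factorial * (-1) ^ n * x ^ (2 * n + 1)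
        / (2 * n + 1) ^ 2)
      (arsinh x ^ 2 / 2 + dilog (1 - exp (-2 * arsinh x)) / 2) := by
  have harsinh {t : ℝ} (ht0 : 0 < t) (ht1 : t < 1) :
      HasSum (fun n : ℕ => poch (1 / 2) n / n.factorial * (-1) ^ n / (2 * n + 1) * t ^ (2 * n))
        (arsinh t / t) := by
    refine ((hasSum_arsinh ((abs_of_pos ht0).trans_lt ht1)).div_const t).congr_fun fun n => ?_
    rw [pow_succ]
    field_simp
  have hcont : ContinuousOn (fun x => arsinh x ^ 2 / 2 + dilog (1 - exp (-2 * arsinh x)) / 2)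
      (uIcc 0 x) := by
    refine .add (by fun_prop) (.div_const (continuousOn_dilog.comp (by fun_prop) fun t ht => ?_) 2)
    rw [uIcc_of_le hx0] at ht
    have hle : exp (-2 * arsinh t) ≤ 1 := exp_le_one_iff.2 (by linarith [arsinh_nonneg_iff.2 ht.1])
    exact ⟨by linarith, by linarith [exp_pos (-2 * arsinh t)]⟩
  obtain ⟨r, hxr, hr1⟩ := exists_between hx1
  have hr0 : 0 < r := hx0.trans_lt hxr
  have h := hasSum_mul_pow_succ_div (harsinh hr0 hr1).summable
    (by rwa [abs_of_nonneg hx0, abs_of_pos hr0]) hcont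
    (fun t ht => hasDerivAt_primitive_arsinh_div (uIoo_of_le hx0 ▸ ht).1)
    (fun t ht => harsinh (uIoo_of_le hx0 ▸ ht).1 ((uIoo_of_le hx0 ▸ ht).2.trans hx1))
  simp only [arsinh_zero, mul_zero, exp_zero, sub_self, dilog_zero] at h
  refine (by simpa using h : HasSum _ _).congr_fun fun n => ?_
  field_simp

theorem arsinh_one_half : arsinh (1 / 2) = log goldenRatio := by
  rw [← arsinh_sinh (log goldenRatio), sinh_log goldenRatio_pos, inv_goldenRatio, sub_neg_eq_add,
    goldenRatio_add_goldenConj]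

end Arsinh

theorem threeF_two_term_eq (n : ℕ) (x : ℝ) :
    poch (1 / 2) n ^ 3 / (poch (3 / 2) n ^ 2 * n.factorial) * (-x ^ 2) ^ n * x =
      poch (1 / 2) n / n.factorial * (-1) ^ n * x ^ (2 * n + 1) / (2 * n + 1) ^ 2 := by
  have hshift : poch (3 / 2) n = poch (1 / 2) n * (2 * n + 1) := by
    have h := mul_poch_add_one (1 / 2) n
    rw [show (1 / 2 + 1 : ℝ) = 3 / 2 by norm_num] at h
    linarith
  have hpoch : poch (1 / 2) n ≠ 0 := (poch_pos (by norm_num) n).ne'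
  rw [hshift, neg_pow, ← pow_mul, pow_succ x]
  field_simp

theorem hasSum_threeF_two {x : ℝ} (hx0 : 0 < x) (hx1 : x < 1) :
    HasSum (fun n : ℕ => poch (1 / 2) n ^ 3 / (poch (3 / 2) n ^ 2 * n.factorial) * (-x ^ 2) ^ n)
      ((arsinh x ^ 2 + dilog (1 - exp (-2 * arsinh x))) / (2 * x)) := by
  have h := (hasSum_primitive_arsinh_div hx0.le hx1).div_const x
  rw [← add_div, div_div] at h
  refine h.congr_fun fun n => ?_
  rw [← threeF_two_term_eq, mul_div_cancel_right₀ _ hx0.ne']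

/-- `₃F₂(1/2, 1/2, 1/2; 3/2, 3/2; -1/4) = π²/10`. -/
theorem threeF_two_neg_quarter :
    ∑' n : ℕ, (poch (1/2) n)^3 / ((poch (3/2) n)^2 * (n.factorial : ℝ)) * (-1/4 : ℝ)^n
      = π^2 / 10 := by
  have hexp : 1 - exp (-2 * log goldenRatio) = goldenRatio⁻¹ := by
    have hsq : exp (-2 * log goldenRatio) = goldenRatio⁻¹ ^ 2 := by
      rw [neg_mul, exp_neg, ← Nat.cast_two, exp_nat_mul, exp_log goldenRatio_pos, inv_pow]
    rw [hsq, inv_goldenRatio_sq, sub_sub_cancel]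
  have hsum := hasSum_threeF_two (x := 1 / 2) (by norm_num) (by norm_num)
  rw [arsinh_one_half, hexp, dilog_inv_goldenRatio] at hsum
  convert hsum.tsum_eq using 1
  · norm_num
  · ring
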